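/- arXiv:1412.1925 — 5 statements merged into one kernel-verified Lean document; each statement's English description precedes it below -/
import Mathlib

section
/- Let v₁, v₂ be a smooth immersed solution of the rescaled isotropic curve shortening system. Then for every τ, d/dτ ∫₀^{2π} e^{−(v₁²+v₂²)/4} · √(v₁'²+v₂'²) dx = − ∫₀^{2π} N² · e^{−(v₁²+v₂²)/4} · √(v₁'²+v₂'²) dx (Huisken's monotonicity formula in the plane). -/
open Real

section helpers

theorem hx_deriv {f : ℝ → ℝ → ℝ} (hf : ContDiff ℝ (⊤ : ℕ∞) (Function.uncurry f)) (t x : ℝ) :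
    HasDerivAt (f t) (fderiv ℝ (Function.uncurry f) (t, x) (0, 1)) x := by
  have h1 : HasFDerivAt (Function.uncurry f) (fderiv ℝ (Function.uncurry f) (t, x)) (t, x) :=
    (hf.differentiable (by simp) (t, x)).hasFDerivAt
  have h2 : HasDerivAt (fun y : ℝ => (t, y)) ((0 : ℝ), (1 : ℝ)) x :=
    (hasDerivAt_const x t).prodMk (hasDerivAt_id x)
  exact h1.comp_hasDerivAt x h2

theorem ht_deriv {f : ℝ → ℝ → ℝ} (hf : ContDiff ℝ (⊤ : ℕ∞) (Function.uncurry f)) (t x : ℝ) :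
    HasDerivAt (fun s => f s x) (fderiv ℝ (Function.uncurry f) (t, x) (1, 0)) t := by
  have h1 : HasFDerivAt (Function.uncurry f) (fderiv ℝ (Function.uncurry f) (t, x)) (t, x) :=
    (hf.differentiable (by simp) (t, x)).hasFDerivAt
  have h2 : HasDerivAt (fun s : ℝ => (s, x)) ((1 : ℝ), (0 : ℝ)) t :=
    (hasDerivAt_id t).prodMk (hasDerivAt_const t x)
  exact h1.comp_hasDerivAt t h2

theorem smooth_dx {f : ℝ → ℝ → ℝ} (hf : ContDiff ℝ (⊤ : ℕ∞) (Function.uncurry f)) :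
    ContDiff ℝ (⊤ : ℕ∞) (Function.uncurry (fun t x => deriv (f t) x)) := by
  have : Function.uncurry (fun t x => deriv (f t) x)
      = fun z => fderiv ℝ (Function.uncurry f) z (0, 1) := by
    funext ⟨t, x⟩
    exact (hx_deriv hf t x).deriv
  rw [this]
  exact (hf.fderiv_right (m := (⊤ : ℕ∞)) (by simp)).clm_apply contDiff_const

theorem smooth_dt {f : ℝ → ℝ → ℝ} (hf : ContDiff ℝ (⊤ : ℕ∞) (Function.uncurry f)) :
    ContDiff ℝ (⊤ : ℕ∞) (Function.uncurry (fun t x => deriv (fun s => f s x) t)) := by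
  have : Function.uncurry (fun t x => deriv (fun s => f s x) t)
      = fun z => fderiv ℝ (Function.uncurry f) z (1, 0) := by
    funext ⟨t, x⟩
    exact (ht_deriv hf t x).deriv
  rw [this]
  exact (hf.fderiv_right (m := (⊤ : ℕ∞)) (by simp)).clm_apply contDiff_const

theorem mixed {f : ℝ → ℝ → ℝ} (hf : ContDiff ℝ (⊤ : ℕ∞) (Function.uncurry f)) (t x : ℝ) :
    deriv (fun s => deriv (f s) x) t = deriv (fun y => deriv (fun s => f s y) t) x := by
  have e1 : Function.uncurry (fun t x => deriv (f t) x)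
      = fun z => fderiv ℝ (Function.uncurry f) z (0, 1) := by
    funext ⟨t, x⟩
    exact (hx_deriv hf t x).deriv
  have e2 : Function.uncurry (fun t x => deriv (fun s => f s x) t)
      = fun z => fderiv ℝ (Function.uncurry f) z (1, 0) := by
    funext ⟨t, x⟩
    exact (ht_deriv hf t x).deriv
  have hd : DifferentiableAt ℝ (fderiv ℝ (Function.uncurry f)) (t, x) :=
    (hf.fderiv_right (m := (⊤ : ℕ∞)) (by simp)).differentiable (by simp) _
  have hsym : IsSymmSndFDerivAt ℝ (Function.uncurry f) (t, x) :=
    hf.contDiffAt.isSymmSndFDerivAt (by simp; exact WithTop.coe_le_coe.2 (le_top : (2 : ℕ∞) ≤ ⊤))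
  rw [(ht_deriv (smooth_dx hf) t x).deriv, (hx_deriv (smooth_dt hf) t x).deriv, e1, e2,
    fderiv_clm_apply hd (by fun_prop), fderiv_clm_apply hd (by fun_prop)]
  simpa using hsym.eq (1, 0) (0, 1)

theorem param_deriv {G : ℝ → ℝ → ℝ} (hG : ContDiff ℝ (⊤ : ℕ∞) (Function.uncurry G)) (a b t : ℝ) :
    HasDerivAt (fun s => ∫ x in a..b, G s x) (∫ x in a..b, deriv (fun s => G s x) t) t := by
  have hc := (smooth_dt hG).continuous
  obtain ⟨C, hC⟩ := ((isCompact_Icc (a := t - 1) (b := t + 1)).prod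
    (isCompact_uIcc (a := a) (b := b))).exists_bound_of_continuousOn hc.continuousOn
  have hGx : ∀ s, Continuous (G s) := fun s => hG.continuous.comp (by fun_prop : Continuous fun x : ℝ => (s, x))
  have hGx' : Continuous (fun x => deriv (fun s => G s x) t) :=
    hc.comp (by fun_prop : Continuous fun x : ℝ => (t, x))
  refine (intervalIntegral.hasDerivAt_integral_of_dominated_loc_of_deriv_le
    (F := G) (F' := fun s x => deriv (fun s => G s x) s) (bound := fun _ => C)
    (s := Set.Icc (t - 1) (t + 1)) (Icc_mem_nhds (by linarith) (by linarith))
    (Filter.Eventually.of_forall fun s => (hGx s).aestronglyMeasurable)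
    ((hGx t).intervalIntegrable _ _) hGx'.aestronglyMeasurable ?_ (by simp) ?_).2
  · refine Filter.Eventually.of_forall fun x hx s hs => ?_
    exact hC (s, x) ⟨hs, Set.uIoc_subset_uIcc hx⟩
  · refine Filter.Eventually.of_forall fun x hx s hs => ?_
    exact (ht_deriv hG s x).differentiableAt.hasDerivAt

/-- the pointwise algebra -/
theorem alg (v w p q p' q' a b a' b' E s : ℝ) (hs : 0 < s) (hss : s ^ 2 = p ^ 2 + q ^ 2)
    (ha : a = v / 2 - q * ((-p' * q + p * q') / (p ^ 2 + q ^ 2) ^ 2))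
    (hb : b = w / 2 + p * ((-p' * q + p * q') / (p ^ 2 + q ^ 2) ^ 2)) :
    (E * (-(2 * v * a + 2 * w * b) / 4)) * s + E * ((2 * p * a' + 2 * q * b') / (2 * s)) =
    -(((q * a - p * b) / s) ^ 2 * E * s) +
    ((E * (-(2 * v * p + 2 * w * q) / 4)) * ((p * a + q * b) / s) +
      E * (((p' * a + p * a' + (q' * b + q * b')) * s
        - (p * a + q * b) * ((2 * p * p' + 2 * q * q') / (2 * s))) / s ^ 2)) := by
  rw [← hss] at ha hb
  have hK : -p' * q + p * q' = ((q * v - p * w) / 2 - (q * a - p * b)) * s ^ 2 := by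
    rw [ha, hb]
    field_simp
    linear_combination (2 * (-p' * q + p * q')) * hss
  field_simp
  linear_combination E * (-2 * (v * a + w * b) * s ^ 2 * hss - 4 * (p' * a + q' * b) * hss + 4 * (q * a - p * b) * hK)

end helpers

/-- Huisken's monotonicity formula in the plane for the rescaled isotropic
curve shortening flow:
`d/dτ ∫₀^{2π} e^{−(v₁²+v₂²)/4} √(v₁'²+v₂'²) dx
  = −∫₀^{2π} N² e^{−(v₁²+v₂²)/4} √(v₁'²+v₂'²) dx`. -/
theorem huisken_monotonicity_formula
    (v₁ v₂ : ℝ → ℝ → ℝ)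
    (hv₁ : ContDiff ℝ (⊤ : ℕ∞) (Function.uncurry v₁))
    (hv₂ : ContDiff ℝ (⊤ : ℕ∞) (Function.uncurry v₂))
    (hper₁ : ∀ τ x : ℝ, v₁ τ (x + 2 * π) = v₁ τ x)
    (hper₂ : ∀ τ x : ℝ, v₂ τ (x + 2 * π) = v₂ τ x)
    (himm : ∀ τ x : ℝ, 0 < (deriv (v₁ τ) x) ^ 2 + (deriv (v₂ τ) x) ^ 2)
    (hpde₁ : ∀ τ x : ℝ, deriv (fun s => v₁ s x) τ =
      v₁ τ x / 2 - deriv (v₂ τ) x *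
        ((-(deriv (deriv (v₁ τ)) x) * deriv (v₂ τ) x
            + deriv (v₁ τ) x * deriv (deriv (v₂ τ)) x) /
          ((deriv (v₁ τ) x) ^ 2 + (deriv (v₂ τ) x) ^ 2) ^ 2))
    (hpde₂ : ∀ τ x : ℝ, deriv (fun s => v₂ s x) τ =
      v₂ τ x / 2 + deriv (v₁ τ) x *
        ((-(deriv (deriv (v₁ τ)) x) * deriv (v₂ τ) x
            + deriv (v₁ τ) x * deriv (deriv (v₂ τ)) x) /
          ((deriv (v₁ τ) x) ^ 2 + (deriv (v₂ τ) x) ^ 2) ^ 2))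
    (N : ℝ → ℝ → ℝ)
    (hN : ∀ τ x : ℝ, N τ x =
      (deriv (v₂ τ) x * deriv (fun s => v₁ s x) τ
        - deriv (v₁ τ) x * deriv (fun s => v₂ s x) τ) /
        Real.sqrt ((deriv (v₁ τ) x) ^ 2 + (deriv (v₂ τ) x) ^ 2)) :
    ∀ τ : ℝ, HasDerivAt
      (fun σ => ∫ x in (0:ℝ)..(2 * π),
        Real.exp (-((v₁ σ x) ^ 2 + (v₂ σ x) ^ 2) / 4) *
          Real.sqrt ((deriv (v₁ σ) x) ^ 2 + (deriv (v₂ σ) x) ^ 2))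
      (-∫ x in (0:ℝ)..(2 * π),
        (N τ x) ^ 2 * Real.exp (-((v₁ τ x) ^ 2 + (v₂ τ x) ^ 2) / 4) *
          Real.sqrt ((deriv (v₁ τ) x) ^ 2 + (deriv (v₂ τ) x) ^ 2)) τ := by
  intro τ
  have hp := smooth_dx hv₁
  have hq := smooth_dx hv₂
  have hS : ContDiff ℝ (⊤ : ℕ∞) (Function.uncurry fun σ x =>
      Real.sqrt ((deriv (v₁ σ) x) ^ 2 + (deriv (v₂ σ) x) ^ 2)) :=
    ((hp.pow 2).add (hq.pow 2)).sqrt (fun z => (himm z.1 z.2).ne')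
  have hE : ContDiff ℝ (⊤ : ℕ∞) (Function.uncurry fun σ x =>
      Real.exp (-((v₁ σ x) ^ 2 + (v₂ σ x) ^ 2) / 4)) :=
    (((hv₁.pow 2).add (hv₂.pow 2)).neg.div_const 4).exp
  have hG := hE.mul hS
  have key := param_deriv (G := fun σ x => Real.exp (-((v₁ σ x) ^ 2 + (v₂ σ x) ^ 2) / 4) *
          Real.sqrt ((deriv (v₁ σ) x) ^ 2 + (deriv (v₂ σ) x) ^ 2)) hG 0 (2 * π) τ
  -- the boundary term
  let B : ℝ → ℝ := fun x => Real.exp (-((v₁ τ x) ^ 2 + (v₂ τ x) ^ 2) / 4) *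
    ((deriv (v₁ τ) x * deriv (fun s => v₁ s x) τ + deriv (v₂ τ) x * deriv (fun s => v₂ s x) τ) /
      Real.sqrt ((deriv (v₁ τ) x) ^ 2 + (deriv (v₂ τ) x) ^ 2))
  have slice : ∀ {f : ℝ → ℝ → ℝ}, ContDiff ℝ (⊤ : ℕ∞) (Function.uncurry f) →
      ContDiff ℝ (⊤ : ℕ∞) (f τ) := fun {f} hf =>
    hf.comp (by fun_prop : ContDiff ℝ (⊤ : ℕ∞) fun x : ℝ => (τ, x))
  have ha := smooth_dt hv₁
  have hb := smooth_dt hv₂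
  have hB : ContDiff ℝ (⊤ : ℕ∞) B :=
    (slice hE).mul ((((slice hp).mul (slice ha)).add ((slice hq).mul (slice hb))).div (slice hS)
      (fun x => (Real.sqrt_pos.2 (himm τ x)).ne'))
  let R : ℝ → ℝ := fun x => (N τ x) ^ 2 * Real.exp (-((v₁ τ x) ^ 2 + (v₂ τ x) ^ 2) / 4) *
          Real.sqrt ((deriv (v₁ τ) x) ^ 2 + (deriv (v₂ τ) x) ^ 2)
  have hNc : Continuous (N τ) := by
    have : N τ = fun x => (deriv (v₂ τ) x * deriv (fun s => v₁ s x) τ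
        - deriv (v₁ τ) x * deriv (fun s => v₂ s x) τ) /
        Real.sqrt ((deriv (v₁ τ) x) ^ 2 + (deriv (v₂ τ) x) ^ 2) := funext (hN τ)
    rw [this]
    exact ((((slice hq).mul (slice ha)).sub ((slice hp).mul (slice hb))).div (slice hS)
      (fun x => (Real.sqrt_pos.2 (himm τ x)).ne')).continuous
  have hR : Continuous R := ((hNc.pow 2).mul (slice hE).continuous).mul (slice hS).continuous
  have hpt : ∀ x, deriv (fun σ => Real.exp (-((v₁ σ x) ^ 2 + (v₂ σ x) ^ 2) / 4) *
          Real.sqrt ((deriv (v₁ σ) x) ^ 2 + (deriv (v₂ σ) x) ^ 2)) τ = -R x + deriv B x := by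
    intro x
    have hs := Real.sqrt_pos.2 (himm τ x)
    have hss := Real.sq_sqrt (himm τ x).le
    have sqd : ∀ {f : ℝ → ℝ} {f' y : ℝ}, HasDerivAt f f' y →
        HasDerivAt (fun y => f y ^ 2) (2 * f y * f') y := fun {f f' y} h => by
      have h2 := h.pow 2
      simp only [Nat.cast_ofNat, Nat.add_one_sub_one, pow_one] at h2
      exact h2
    have dt : ∀ {f : ℝ → ℝ → ℝ}, ContDiff ℝ (⊤ : ℕ∞) (Function.uncurry f) →
        HasDerivAt (fun s => f s x) (deriv (fun s => f s x) τ) τ := fun {f} hf =>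
      (ht_deriv hf τ x).differentiableAt.hasDerivAt
    have dx : ∀ {f : ℝ → ℝ → ℝ}, ContDiff ℝ (⊤ : ℕ∞) (Function.uncurry f) →
        HasDerivAt (f τ) (deriv (f τ) x) x := fun {f} hf =>
      (hx_deriv hf τ x).differentiableAt.hasDerivAt
    have dtp := dt hp
    have dtq := dt hq
    rw [mixed hv₁] at dtp
    rw [mixed hv₂] at dtq
    have L := ((((sqd (dt hv₁)).add (sqd (dt hv₂))).neg.div_const 4).exp).mul
      (((sqd dtp).add (sqd dtq)).sqrt (himm τ x).ne')
    have Q := ((((sqd (dx hv₁)).add (sqd (dx hv₂))).neg.div_const 4).exp).mul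
      ((((dx hp).mul (dx ha)).add ((dx hq).mul (dx hb))).div
      (((sqd (dx hp)).add (sqd (dx hq))).sqrt (himm τ x).ne') hs.ne')
    have L' := L.deriv
    have Q' : deriv B x = _ := Q.deriv
    refine L'.trans ?_
    rw [Q']
    simp only [R, hN]
    exact alg _ _ _ _ _ _ _ _ _ _ _ _ hs hss (hpde₁ τ x) (hpde₂ τ x)
  have hper : B (2 * π) = B 0 := by
    have pd : ∀ {f : ℝ → ℝ → ℝ}, (∀ τ x : ℝ, f τ (x + 2 * π) = f τ x) →
        deriv (f τ) (2 * π) = deriv (f τ) 0 := fun {f} h => by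
      have := deriv_comp_add_const (f τ) (2 * π) 0
      rw [show (fun x => f τ (x + 2 * π)) = f τ from funext (h τ)] at this
      simpa using this.symm
    have p0 : ∀ {f : ℝ → ℝ → ℝ}, (∀ τ x : ℝ, f τ (x + 2 * π) = f τ x) →
        ∀ s, f s (2 * π) = f s 0 := fun {f} h s => by simpa using h s 0
    simp only [B, pd hper₁, pd hper₂, p0 hper₁, p0 hper₂]
  have hint : ∫ x in (0:ℝ)..(2 * π), deriv B x = 0 := by
    rw [intervalIntegral.integral_deriv_eq_sub
      (fun x _ => hB.differentiable (by simp) x)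
      ((hB.continuous_deriv (by simp)).intervalIntegrable _ _), hper, sub_self]
  convert key using 1
  simp only [hpt]
  rw [intervalIntegral.integral_add (f := fun x => -R x) (hR.neg.intervalIntegrable _ _)
    ((hB.continuous_deriv (by simp)).intervalIntegrable _ _), hint,
    intervalIntegral.integral_neg, add_zero]
end

section
/- The function f(ψ) = ψ sin ψ + cos ψ · log(cos ψ) is even on (−π/2, π/2) (f(−ψ) = f(ψ)) and convex on (−π/2, π/2). -/
open Real

lemma aux_tan (x : ℝ) (hx : x ∈ Set.Ioo (-(π / 2)) (π / 2)) :
    x * Real.sin x ≤ Real.sin x * Real.sin x / Real.cos x := by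
  have key : ∀ y : ℝ, 0 ≤ y → y < π / 2 →
      y * Real.sin y ≤ Real.sin y * Real.sin y / Real.cos y := by
    intro y h0 h1
    have h2 : 0 ≤ Real.sin y := Real.sin_nonneg_of_nonneg_of_le_pi h0 (by linarith [Real.pi_pos])
    have h3 := Real.le_tan h0 h1
    rw [Real.tan_eq_sin_div_cos] at h3
    calc y * Real.sin y ≤ Real.sin y / Real.cos y * Real.sin y :=
          mul_le_mul_of_nonneg_right h3 h2
      _ = _ := by ring
  rcases le_total 0 x with h | h
  · exact key x h hx.2
  · have := key (-x) (by linarith) (by linarith [hx.1])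
    simpa using this

/-- The function `f(ψ) = ψ sin ψ + cos ψ · log (cos ψ)` is even and convex
on `(−π/2, π/2)`. -/
theorem f_even_and_convex
    (f : ℝ → ℝ)
    (hf : ∀ s : ℝ, f s = s * Real.sin s + Real.cos s * Real.log (Real.cos s)) :
    (∀ ψ ∈ Set.Ioo (-(π / 2)) (π / 2), f (-ψ) = f ψ) ∧
      ConvexOn ℝ (Set.Ioo (-(π / 2)) (π / 2)) f := by
  refine ⟨fun ψ _ => by simp [hf], ?_⟩
  obtain rfl : f = fun s => s * Real.sin s + Real.cos s * Real.log (Real.cos s) := funext hf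
  have h1 : ∀ x ∈ Set.Ioo (-(π / 2)) (π / 2),
      HasDerivAt (fun s => s * Real.sin s + Real.cos s * Real.log (Real.cos s))
        (x * Real.cos x - Real.sin x * Real.log (Real.cos x)) x := by
    intro x hx
    have hc := (Real.cos_pos_of_mem_Ioo hx).ne'
    have h := ((hasDerivAt_id' x).mul (Real.hasDerivAt_sin x)).add
      ((Real.hasDerivAt_cos x).mul ((Real.hasDerivAt_cos x).log hc))
    refine h.congr_deriv ?_
    field_simp
    ring
  have h2 : ∀ x ∈ Set.Ioo (-(π / 2)) (π / 2),
      HasDerivAt (fun x => x * Real.cos x - Real.sin x * Real.log (Real.cos x))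
        (Real.cos x - x * Real.sin x - Real.cos x * Real.log (Real.cos x)
          + Real.sin x * Real.sin x / Real.cos x) x := by
    intro x hx
    have hc := (Real.cos_pos_of_mem_Ioo hx).ne'
    have h := ((hasDerivAt_id' x).mul (Real.hasDerivAt_cos x)).sub
      ((Real.hasDerivAt_sin x).mul ((Real.hasDerivAt_cos x).log hc))
    refine h.congr_deriv ?_
    ring
  refine convexOn_of_hasDerivWithinAt2_nonneg (convex_Ioo _ _)
    (fun x hx => (h1 x hx).continuousAt.continuousWithinAt)
    (f' := fun x => x * Real.cos x - Real.sin x * Real.log (Real.cos x))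
    (f'' := fun x => Real.cos x - x * Real.sin x - Real.cos x * Real.log (Real.cos x)
          + Real.sin x * Real.sin x / Real.cos x) ?_ ?_ ?_ <;> rw [interior_Ioo]
  · exact fun x hx => (h1 x hx).hasDerivWithinAt
  · exact fun x hx => (h2 x hx).hasDerivWithinAt
  · intro x hx
    have hc := Real.cos_pos_of_mem_Ioo hx
    have hl := mul_nonpos_of_nonneg_of_nonpos hc.le
      (Real.log_nonpos hc.le (Real.cos_le_one x))
    have := aux_tan x hx
    linarith
end

section
/- The function f(ψ) = ψ sin ψ + cos ψ · log(cos ψ) satisfies 0 ≤ f(ψ) < π/2 for all ψ ∈ (−π/2, π/2), and f(ψ) → π/2 as ψ → π/2 from the left; in particular f is nonnegative and bounded on (−π/2, π/2). -/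
open Real Filter

/-- The function `f(ψ) = ψ sin ψ + cos ψ · log (cos ψ)` satisfies
`0 ≤ f ψ < π/2` on `(−π/2, π/2)` and `f ψ → π/2` as `ψ → π/2⁻`;
in particular `f` is nonnegative and bounded on `(−π/2, π/2)`. -/
theorem f_nonneg_bounded_limit
    (f : ℝ → ℝ)
    (hf : ∀ s : ℝ, f s = s * Real.sin s + Real.cos s * Real.log (Real.cos s)) :
    (∀ ψ ∈ Set.Ioo (-(π / 2)) (π / 2), 0 ≤ f ψ ∧ f ψ < π / 2) ∧
      Filter.Tendsto f (nhdsWithin (π / 2) (Set.Iio (π / 2))) (nhds (π / 2)) := by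
  have key : ∀ x : ℝ, 0 ≤ x → x < π / 2 → sin x ^ 2 ≤ x * sin x ∧ x * sin x < π / 2 := by
    intro x h0 h1
    have hs : 0 ≤ sin x := sin_nonneg_of_nonneg_of_le_pi h0 (by linarith [pi_pos])
    have hle := sin_le h0
    have h1' := sin_le_one x
    constructor <;> nlinarith
  constructor
  · rintro x ⟨h1, h2⟩
    have hk : sin x ^ 2 ≤ x * sin x ∧ x * sin x < π / 2 := by
      rcases le_total 0 x with h | h
      · exact key x h h2
      · simpa using key (-x) (by linarith) (by linarith)
    have hc : 0 < cos x := cos_pos_of_mem_Ioo ⟨h1, h2⟩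
    have hc1 := cos_le_one x
    have hlog : log (cos x) ≤ 0 := log_nonpos hc.le hc1
    have hl := mul_le_mul_of_nonneg_left (one_sub_inv_le_log_of_pos hc) hc.le
    rw [mul_sub, mul_inv_cancel₀ hc.ne'] at hl
    have hsq := sin_sq_add_cos_sq x
    rw [hf]
    constructor <;> nlinarith [hk.1, hk.2]
  · have hcont : Continuous f := by
      have : f = fun s => s * sin s + cos s * log (cos s) := funext hf
      rw [this]
      exact (continuous_id.mul continuous_sin).add (continuous_mul_log.comp continuous_cos)
    have h := hcont.tendsto (π / 2)
    have hv : f (π / 2) = π / 2 := by rw [hf]; simp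
    rw [hv] at h
    exact h.mono_left nhdsWithin_le_nhds
end

section
/- Let h : ℝ → ℝ be continuous and 2π-periodic. There exists a twice continuously differentiable 2π-periodic function f : ℝ → ℝ with f''(φ) + f(φ) = h(φ) for all φ if and only if ∫₀^{2π} h(φ) cos φ dφ = 0 and ∫₀^{2π} h(φ) sin φ dφ = 0. -/
open Real

lemma prim_periodic (g : ℝ → ℝ) (hg : Continuous g) (hp : ∀ x, g (x + 2 * π) = g x)
    (h0 : (∫ x in (0:ℝ)..(2 * π), g x) = 0) (x : ℝ) :
    (∫ t in (0:ℝ)..(x + 2 * π), g t) = ∫ t in (0:ℝ)..x, g t := by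
  have hP : Function.Periodic g (2 * π) := hp
  have h1 := hP.intervalIntegral_add_eq x 0
  rw [zero_add, h0] at h1
  rw [← intervalIntegral.integral_add_adjacent_intervals (hg.intervalIntegrable 0 x)
    (hg.intervalIntegrable x _), h1, add_zero]

/-- For continuous `2π`-periodic `h`, there is a `C²` `2π`-periodic solution of
`f'' + f = h` if and only if `∫₀^{2π} h cos = 0` and `∫₀^{2π} h sin = 0`. -/
theorem periodic_solvability_criterion
    (h : ℝ → ℝ) (hh : Continuous h)
    (hper : ∀ φ : ℝ, h (φ + 2 * π) = h φ) :
    (∃ f : ℝ → ℝ, ContDiff ℝ 2 f ∧ (∀ φ : ℝ, f (φ + 2 * π) = f φ) ∧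
        ∀ φ : ℝ, deriv (deriv f) φ + f φ = h φ) ↔
      (∫ φ in (0:ℝ)..(2 * π), h φ * Real.cos φ) = 0 ∧
        (∫ φ in (0:ℝ)..(2 * π), h φ * Real.sin φ) = 0 := by
  have hc : Continuous fun φ => h φ * Real.cos φ := by fun_prop
  have hs : Continuous fun φ => h φ * Real.sin φ := by fun_prop
  constructor
  · rintro ⟨f, hf, hfp, hode⟩
    have hf1 : ∀ x, HasDerivAt f (deriv f x) x := fun x =>
      (hf.differentiable (by norm_num) x).hasDerivAt
    have hf' : ContDiff ℝ 1 (deriv f) := by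
      have h2 : ContDiff ℝ (1 + 1) f := by
        rw [one_add_one_eq_two]; exact hf
      exact (contDiff_succ_iff_deriv.1 h2).2.2
    have hf2 : ∀ x, HasDerivAt (deriv f) (deriv (deriv f) x) x := fun x =>
      (hf'.differentiable (by norm_num) x).hasDerivAt
    have hdp : deriv f (2 * π) = deriv f 0 := by
      have : (fun x => f (x + 2 * π)) = f := funext hfp
      have h3 := deriv_comp_add_const f (2 * π) 0
      rw [this, zero_add] at h3
      exact h3.symm
    have hf0 : f (2 * π) = f 0 := by simpa using hfp 0
    constructor
    · rw [intervalIntegral.integral_eq_sub_of_hasDerivAt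
        (f := fun x => deriv f x * Real.cos x + f x * Real.sin x) _ (hc.intervalIntegrable _ _)]
      · simp [hdp]
      · intro x _
        refine (((hf2 x).mul (Real.hasDerivAt_cos x)).add
          ((hf1 x).mul (Real.hasDerivAt_sin x))).congr_deriv ?_
        rw [← hode x]; ring
    · rw [intervalIntegral.integral_eq_sub_of_hasDerivAt
        (f := fun x => deriv f x * Real.sin x - f x * Real.cos x) _ (hs.intervalIntegrable _ _)]
      · simp [hf0]
      · intro x _
        refine (((hf2 x).mul (Real.hasDerivAt_sin x)).sub
          ((hf1 x).mul (Real.hasDerivAt_cos x))).congr_deriv ?_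
        rw [← hode x]; ring
  · rintro ⟨hA0, hB0⟩
    have hAp := prim_periodic _ hc (fun x => by simp [hper]) hA0
    have hBp := prim_periodic _ hs (fun x => by simp [hper]) hB0
    have hA : ∀ x, HasDerivAt (fun x => ∫ t in (0:ℝ)..x, h t * Real.cos t)
      (h x * Real.cos x) x := fun x => hc.integral_hasStrictDerivAt 0 x |>.hasDerivAt
    have hB : ∀ x, HasDerivAt (fun x => ∫ t in (0:ℝ)..x, h t * Real.sin t)
      (h x * Real.sin x) x := fun x => hs.integral_hasStrictDerivAt 0 x |>.hasDerivAt
    obtain ⟨A, hAdef⟩ : ∃ A : ℝ → ℝ, A = fun x => ∫ t in (0:ℝ)..x, h t * Real.cos t := ⟨_, rfl⟩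
    obtain ⟨B, hBdef⟩ : ∃ B : ℝ → ℝ, B = fun x => ∫ t in (0:ℝ)..x, h t * Real.sin t := ⟨_, rfl⟩
    rw [← hAdef] at hA
    rw [← hBdef] at hB
    have hAp' : ∀ x, A (x + 2 * π) = A x := by rw [hAdef]; exact hAp
    have hBp' : ∀ x, B (x + 2 * π) = B x := by rw [hBdef]; exact hBp
    have d1 : ∀ x, HasDerivAt (fun x => Real.sin x * A x - Real.cos x * B x)
        (Real.cos x * A x + Real.sin x * B x) x := fun x => by
      refine (((Real.hasDerivAt_sin x).mul (hA x)).sub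
        ((Real.hasDerivAt_cos x).mul (hB x))).congr_deriv ?_
      ring
    have d2 : ∀ x, HasDerivAt (fun x => Real.cos x * A x + Real.sin x * B x)
        (h x - (Real.sin x * A x - Real.cos x * B x)) x := fun x => by
      refine (((Real.hasDerivAt_cos x).mul (hA x)).add
        ((Real.hasDerivAt_sin x).mul (hB x))).congr_deriv ?_
      linear_combination h x * Real.sin_sq_add_cos_sq x
    have e1 := funext fun x => (d1 x).deriv
    have e2 := funext fun x => (d2 x).deriv
    refine ⟨fun x => Real.sin x * A x - Real.cos x * B x, ?_, ?_, ?_⟩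
    · rw [← one_add_one_eq_two, contDiff_succ_iff_deriv]
      refine ⟨fun x => (d1 x).differentiableAt, by simp, ?_⟩
      rw [e1, contDiff_one_iff_deriv]
      refine ⟨fun x => (d2 x).differentiableAt, ?_⟩
      rw [e2]
      exact hh.sub (continuous_iff_continuousAt.2 fun x => (d1 x).continuousAt)
    · intro x
      simp [hAp', hBp']
    · intro x
      rw [e1, e2]
      ring
end

section
/- Let g : ℝ → ℝ be continuous and let b̃ : ℝ³ → ℝ be continuously differentiable. Define b(ξ₁, ξ₂, φ) := b̃(ξ₁ cos φ + ξ₂ sin φ, ξ₁ sin φ − ξ₂ cos φ, φ). Then b satisfies 2g(φ) cos φ · ∂b/∂ξ₁ + 2g(φ) sin φ · ∂b/∂ξ₂ + (ξ₁ sin φ − ξ₂ cos φ) · ∂b/∂φ = −ξ₁ cos φ − ξ₂ sin φ at a point (ξ₁, ξ₂, φ) if and only if b̃ satisfies (2g(φ) − ξ̃₂²)·∂b̃/∂ξ̃₁ + ξ̃₁ξ̃₂·∂b̃/∂ξ̃₂ + ξ̃₂·∂b̃/∂φ = −ξ̃₁ at the corresponding point (ξ̃₁, ξ̃₂, φ)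 = (ξ₁ cos φ + ξ₂ sin φ, ξ₁ sin φ − ξ₂ cos φ, φ). -/
open Real

/-- The coordinate transformation `ξ̃₁ = ξ₁ cos φ + ξ₂ sin φ`,
`ξ̃₂ = ξ₁ sin φ − ξ₂ cos φ`, `φ̃ = φ` converts the first-order PDE
`2g(φ) cos φ·∂b/∂ξ₁ + 2g(φ) sin φ·∂b/∂ξ₂ + (ξ₁ sin φ − ξ₂ cos φ)·∂b/∂φ
  = −ξ₁ cos φ − ξ₂ sin φ`
into the PDE (1-PDE)
`(2g(φ) − ξ̃₂²)·∂b̃/∂ξ̃₁ + ξ̃₁ξ̃₂·∂b̃/∂ξ̃₂ + ξ̃₂·∂b̃/∂φ = −ξ̃₁`. -/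
theorem coordinate_change_of_PDE
    (g : ℝ → ℝ) (hg : Continuous g)
    (bt : ℝ → ℝ → ℝ → ℝ)
    (hbt : ContDiff ℝ 1 (fun p : ℝ × ℝ × ℝ => bt p.1 p.2.1 p.2.2))
    (b : ℝ → ℝ → ℝ → ℝ)
    (hb : ∀ ξ₁ ξ₂ φ : ℝ, b ξ₁ ξ₂ φ =
      bt (ξ₁ * Real.cos φ + ξ₂ * Real.sin φ) (ξ₁ * Real.sin φ - ξ₂ * Real.cos φ) φ) :
    ∀ ξ₁ ξ₂ φ : ℝ,
      (2 * g φ * Real.cos φ * deriv (fun s => b s ξ₂ φ) ξ₁ +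
          2 * g φ * Real.sin φ * deriv (fun s => b ξ₁ s φ) ξ₂ +
          (ξ₁ * Real.sin φ - ξ₂ * Real.cos φ) * deriv (fun s => b ξ₁ ξ₂ s) φ
        = -ξ₁ * Real.cos φ - ξ₂ * Real.sin φ) ↔
      ((2 * g φ - (ξ₁ * Real.sin φ - ξ₂ * Real.cos φ) ^ 2) *
            deriv (fun s => bt s (ξ₁ * Real.sin φ - ξ₂ * Real.cos φ) φ)
              (ξ₁ * Real.cos φ + ξ₂ * Real.sin φ) +
          (ξ₁ * Real.cos φ + ξ₂ * Real.sin φ) * (ξ₁ * Real.sin φ - ξ₂ * Real.cos φ) *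
            deriv (fun s => bt (ξ₁ * Real.cos φ + ξ₂ * Real.sin φ) s φ)
              (ξ₁ * Real.sin φ - ξ₂ * Real.cos φ) +
          (ξ₁ * Real.sin φ - ξ₂ * Real.cos φ) *
            deriv (fun s => bt (ξ₁ * Real.cos φ + ξ₂ * Real.sin φ)
              (ξ₁ * Real.sin φ - ξ₂ * Real.cos φ) s) φ
        = -(ξ₁ * Real.cos φ + ξ₂ * Real.sin φ)) := by
  intro ξ₁ ξ₂ φ
  set x := ξ₁ * Real.cos φ + ξ₂ * Real.sin φ with hx
  set y := ξ₁ * Real.sin φ - ξ₂ * Real.cos φ with hy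
  have hF := ((hbt.differentiable (by norm_num)) (x, y, φ)).hasFDerivAt
  set L := fderiv ℝ (fun p : ℝ × ℝ × ℝ => bt p.1 p.2.1 p.2.2) (x, y, φ) with hL
  have key : ∀ (u v w : ℝ → ℝ) (u' v' w' t : ℝ), HasDerivAt u u' t → HasDerivAt v v' t →
      HasDerivAt w w' t → u t = x → v t = y → w t = φ →
      deriv (fun s => bt (u s) (v s) (w s)) t
        = u' * L (1, 0, 0) + v' * L (0, 1, 0) + w' * L (0, 0, 1) := by
    intro u v w u' v' w' t hu hv hw h1 h2 h3
    have hc := hu.prodMk (hv.prodMk hw)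
    have hF' : HasFDerivAt (fun p : ℝ × ℝ × ℝ => bt p.1 p.2.1 p.2.2) L (u t, v t, w t) := by
      rw [h1, h2, h3]; exact hF
    have h := (hF'.comp_hasDerivAt t hc).deriv
    have e : ((u', v', w') : ℝ × ℝ × ℝ)
        = u' • (1, 0, 0) + v' • (0, 1, 0) + w' • (0, 0, 1) := by
      simp
    rw [e, map_add, map_add, map_smul, map_smul, map_smul] at h
    simp only [smul_eq_mul] at h
    exact h
  have d1 := key (fun s => s) (fun _ => y) (fun _ => φ) 1 0 0 x (hasDerivAt_id x)
    (hasDerivAt_const _ _) (hasDerivAt_const _ _) rfl rfl rfl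
  have d2 := key (fun _ => x) (fun s => s) (fun _ => φ) 0 1 0 y (hasDerivAt_const _ _)
    (hasDerivAt_id y) (hasDerivAt_const _ _) rfl rfl rfl
  have d3 := key (fun _ => x) (fun _ => y) (fun s => s) 0 0 1 φ (hasDerivAt_const _ _)
    (hasDerivAt_const _ _) (hasDerivAt_id φ) rfl rfl rfl
  have e1 := key (fun s => s * Real.cos φ + ξ₂ * Real.sin φ)
    (fun s => s * Real.sin φ - ξ₂ * Real.cos φ) (fun _ => φ) (1 * Real.cos φ) (1 * Real.sin φ) 0 ξ₁
    (((hasDerivAt_id ξ₁).mul_const _).add_const _) (((hasDerivAt_id ξ₁).mul_const _).sub_const _)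
    (hasDerivAt_const _ _) rfl rfl rfl
  have e2 := key (fun s => ξ₁ * Real.cos φ + s * Real.sin φ)
    (fun s => ξ₁ * Real.sin φ - s * Real.cos φ) (fun _ => φ) (1 * Real.sin φ)
    (-(1 * Real.cos φ)) 0 ξ₂
    (((hasDerivAt_id ξ₂).mul_const _).const_add _) (((hasDerivAt_id ξ₂).mul_const _).const_sub _)
    (hasDerivAt_const _ _) rfl rfl rfl
  have e3 := key (fun s => ξ₁ * Real.cos s + ξ₂ * Real.sin s)
    (fun s => ξ₁ * Real.sin s - ξ₂ * Real.cos s) (fun s => s)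
    (ξ₁ * (-Real.sin φ) + ξ₂ * Real.cos φ) (ξ₁ * Real.cos φ - ξ₂ * (-Real.sin φ)) 1 φ
    (((Real.hasDerivAt_cos φ).const_mul _).add ((Real.hasDerivAt_sin φ).const_mul _))
    (((Real.hasDerivAt_sin φ).const_mul _).sub ((Real.hasDerivAt_cos φ).const_mul _))
    (hasDerivAt_id φ) rfl rfl rfl
  simp only [hb]
  rw [d1, d2, d3, e1, e2, e3]
  have hcs := Real.sin_sq_add_cos_sq φ
  generalize L (1, 0, 0) = P
  generalize L (0, 1, 0) = Q
  generalize L (0, 0, 1) = R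
  rw [← sub_eq_zero, ← sub_eq_zero (b := -x)]
  refine Eq.congr ?_ rfl
  rw [hx, hy]
  linear_combination (2 * g φ * P) * hcs
end
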